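/- arXiv:1809.01634 — 2 statements merged into one kernel-verified Lean document; each statement's English description precedes it below -/
import Mathlib

section
/- Every computable amenable group admits a modest Følner sequence, i.e. a Følner sequence (F_i) with C(F_i)/|F_i| → 0. -/
open Filter MeasureTheory
open scoped Pointwise Classical

namespace Brudno

noncomputable section

/-- Complexity of a binary string `x` relative to a partial function `f` :
the minimal length of a `y` with `f y = x`. -/
def CF (f : List Bool →. List Bool) (x : List Bool) : ℕ :=
  sInf { n | ∃ y : List Bool, y.length = n ∧ x ∈ f y }

/-- `u` is an optimal partial computable machine: it is partial computable, and for
every partial computable `f` there is a constant `K` with `C_u x ≤ C_f x + K` for all `x`. -/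
def Optimal (u : List Bool →. List Bool) : Prop :=
  Partrec u ∧ ∀ f : List Bool →. List Bool, Partrec f →
    ∃ K : ℕ, ∀ x y : List Bool, x ∈ f y → CF u x ≤ y.length + K

/-- Kolmogorov complexity of a natural number (relative to the machine `u`),
via the binary representation. -/
def KC (u : List Bool →. List Bool) (n : ℕ) : ℕ := CF u (Nat.bits n)

/-- A fixed computable injective encoding of finite subsets of `ℕ` into `ℕ`
(hence into binary strings). -/
def encFinsetNat (F : Finset ℕ) : ℕ := Encodable.encode (F.sort (· ≤ ·))

variable {G A B : Type}

/-- Encoding of a finite subset of `G`, where `G` has underlying set `ℕ` via `e`. -/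
def encFinset (e : G ≃ ℕ) (F : Finset G) : ℕ := encFinsetNat (F.image e)

/-- The group multiplication is computable on the underlying set `ℕ`. -/
def ComputableMul [Group G] (e : G ≃ ℕ) : Prop :=
  Computable₂ fun m n : ℕ => e (e.symm m * e.symm n)

/-- A Følner sequence: a sequence of (nonempty) finite subsets with
`|gFᵢ \ Fᵢ| / |Fᵢ| → 0` for every `g ∈ G`. -/
def IsFolner [Group G] (F : ℕ → Finset G) : Prop :=
  (∀ i, (F i).Nonempty) ∧
    ∀ g : G,
      Tendsto (fun i => (((F i).image (fun h => g * h) \ F i).card : ℝ) / ((F i).card : ℝ))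
        atTop (nhds 0)

/-- A tempered sequence: `|⋃_{j<i} Fⱼ⁻¹ Fᵢ| ≤ K |Fᵢ|` for all `i`. -/
def Tempered [Group G] (F : ℕ → Finset G) : Prop :=
  ∃ K : ℝ, 0 < K ∧
    ∀ i : ℕ, ((((Finset.range i).biUnion fun j => (F j)⁻¹ * F i)).card : ℝ) ≤ K * ((F i).card : ℝ)

/-- A modest sequence: `C(Fᵢ)/|Fᵢ| → 0`. -/
def Modest (u : List Bool →. List Bool) (e : G ≃ ℕ) (F : ℕ → Finset G) : Prop :=
  Tendsto (fun i => (KC u (encFinset e (F i)) : ℝ) / ((F i).card : ℝ)) atTop (nhds 0)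

/-- The shift action of `G` on `A^G`: `(g • x) h = x (h * g)`. -/
def shift [Group G] (g : G) (x : G → A) : G → A := fun h => x (h * g)

/-- A fixed computable injective encoding of the restriction of `x : G → A` to a finite
subset `F ⊆ G` (a partial map with finite domain), listing the domain in increasing
order of the ℕ-codes. -/
def encRestrict [Encodable A] (e : G ≃ ℕ) (F : Finset G) (x : G → A) : ℕ :=
  Encodable.encode
    (((F.image e).sort (· ≤ ·)).map fun n => (n, Encodable.encode (x (e.symm n))))

/-- Upper asymptotic complexity of `x ∈ A^G` relative to the sequence `F`. -/
def uac [Encodable A] (u : List Bool →. List Bool) (e : G ≃ ℕ) (F : ℕ → Finset G)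
    (x : G → A) : ℝ :=
  limsup (fun i => (KC u (encRestrict e (F i) x) : ℝ) / ((F i).card : ℝ)) atTop

/-- Lower asymptotic complexity of `x ∈ A^G` relative to the sequence `F`. -/
def lac [Encodable A] (u : List Bool →. List Bool) (e : G ≃ ℕ) (F : ℕ → Finset G)
    (x : G → A) : ℝ :=
  liminf (fun i => (KC u (encRestrict e (F i) x) : ℝ) / ((F i).card : ℝ)) atTop

/-- The product topology on `A^G`, `A` being discrete. -/
def prodiscrete (G A : Type) : TopologicalSpace (G → A) :=
  @Pi.topologicalSpace G (fun _ => A) fun _ => ⊥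

/-- The Borel σ-algebra of the prodiscrete topology on `A^G`. -/
def prodisBorel (G A : Type) : MeasurableSpace (G → A) := @borel (G → A) (prodiscrete G A)

/-- A subshift: a closed shift-invariant subset of `A^G`. -/
def IsSubshift [Group G] (X : Set (G → A)) : Prop :=
  @IsClosed (G → A) (prodiscrete G A) X ∧ ∀ g : G, ∀ x ∈ X, shift g x ∈ X

/-- The number of distinct restrictions to `F` of elements of `X`, i.e. `|pr_F(X)|`. -/
def projCount (F : Finset G) (X : Set (G → A)) : ℕ :=
  Nat.card ↥((fun (x : G → A) (g : ↥F) => x ↑g) '' X)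

/-- Shannon entropy (base 2) of the join partition `α^F` (whose atoms are the
cylinders over the finite set `F`), for the measure `μ`. -/
def Hjoin [Fintype A] (μ : @Measure (G → A) (prodisBorel G A)) (F : Finset G) : ℝ :=
  -∑ w : ↥F → A,
      (μ {x : G → A | ∀ g : ↥F, x ↑g = w g}).toReal *
        Real.logb 2 (μ {x : G → A | ∀ g : ↥F, x ↑g = w g}).toReal

/-- Shannon entropy (base 2) of the canonical alphabet partition. -/
def Halpha [Group G] [Fintype A] (μ : @Measure (G → A) (prodisBorel G A)) : ℝ :=
  -∑ a : A, (μ {x : G → A | x 1 = a}).toReal * Real.logb 2 (μ {x : G → A | x 1 = a}).toReal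

/-- `cont` of the restriction of `x` to `F`: the word of values of `x` on `F`,
listed in increasing order of the ℕ-codes of the elements of `F`. -/
def contWord (e : G ≃ ℕ) (F : Finset G) (x : G → A) : List A :=
  ((F.image e).sort (· ≤ ·)).map fun n => x (e.symm n)

/-- A fixed computable injective encoding of words over `A`. -/
def encWord [Encodable A] (w : List A) : ℕ := Encodable.encode w

/-- Frequency of the letter `a` in the word `w`. -/
def freq (w : List A) (a : A) : ℝ :=
  ((w.filter fun b => decide (b = a)).length : ℝ) / (w.length : ℝ)

/-- Shannon entropy (base 2) of the letter-frequency vector of the word `w`. -/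
def wordEntropy [Fintype A] (w : List A) : ℝ :=
  -∑ a : A, freq w a * Real.logb 2 (freq w a)

/-- The binary entropy function `H(p, 1-p)`. -/
def Hbin (p : ℝ) : ℝ := -(p * Real.logb 2 p) - (1 - p) * Real.logb 2 (1 - p)

/-- Normalized Hamming distance between two words (of the same length). -/
def hammingDist (w w' : List A) : ℝ :=
  (((w.zip w').filter fun p => decide (p.1 ≠ p.2)).length : ℝ) / (w.length : ℝ)

end

section Helpers

theorem computable_count {α : Type} [Primcodable α] {p : α → ℕ → Bool} {f : α → ℕ}
    (hp : Computable₂ p) (hf : Computable f) :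
    Computable fun a => Nat.count (fun x => p a x = true) (f a) := by
  have h : Computable₂ fun (a : α) (q : ℕ × ℕ) => cond (p a q.1) (q.2 + 1) q.2 := by
    refine Computable.cond (hp.comp Computable.fst (Computable.fst.comp Computable.snd)) ?_ ?_
    · exact Computable.succ.comp (Computable.snd.comp Computable.snd)
    · exact Computable.snd.comp Computable.snd
  refine (Computable.nat_rec hf (Computable.const 0) h).of_eq fun a => ?_
  induction f a with
  | zero => simp
  | succ n ih =>
    rw [Nat.count_succ, ← ih]
    cases hpn : p a n <;> simp [hpn]

theorem primrec_bits : Primrec Nat.bits := by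
  have hg : Primrec₂ fun (_ : Unit) (l : List (List Bool)) =>
      bif (decide (l.length = 0)) then (some [] : Option (List Bool)) else
        (l[l.length.div2]?).map fun b => l.length.bodd :: b := by
    refine Primrec.cond ?_ (Primrec.const _) ?_
    · exact (Primrec.eq.comp (Primrec.list_length.comp Primrec.snd) (Primrec.const 0)).decide
    · refine Primrec.option_map (Primrec.list_getElem?.comp Primrec.snd
        (Primrec.nat_div2.comp (Primrec.list_length.comp Primrec.snd))) ?_
      exact Primrec.list_cons.comp
        (Primrec.nat_bodd.comp (Primrec.list_length.comp (Primrec.snd.comp Primrec.fst)))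
        Primrec.snd
  have := Primrec.nat_strong_rec (fun (_ : Unit) n => Nat.bits n) hg ?_
  · exact this.comp (Primrec.const ()) Primrec.id
  · intro _ n
    rcases Nat.eq_zero_or_pos n with rfl | hn
    · simp
    · have hlt : n.div2 < n := by rw [Nat.div2_val]; omega
      have h0 : n ≠ 0 := by omega
      simp only [List.length_map, List.length_range, h0, decide_false, cond_false,
        List.getElem?_map, List.getElem?_range hlt, Option.map_some, Option.some.injEq]
      conv_rhs => rw [← Nat.bit_bodd_div2 n]
      rw [Nat.bits_append_bit]
      intro hz
      rw [Nat.div2_val] at hz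
      have : n = 1 := by omega
      subst this; rfl

/-- Membership in the finite set coded by the characteristic word `w`. -/
def memB (w : List Bool) (x : ℕ) : Bool := (w[x]?).getD false

/-- The increasing list coded by `w`. -/
def lst (w : List Bool) : List ℕ := (List.range w.length).filter (memB w)

/-- The number of elements moved outside by left multiplication by `g`. -/
def badN (mul : ℕ → ℕ → ℕ) (w : List Bool) (g : ℕ) : ℕ :=
  Nat.count (fun x => (memB w x && !(memB w (mul g x))) = true) w.length

/-- The number of elements of the coded set. -/
def sizeN (w : List Bool) : ℕ := Nat.count (fun x => memB w x = true) w.length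

/-- The quantitative Følner condition. -/
def okB (mul : ℕ → ℕ → ℕ) (N : ℕ) (w : List Bool) : Bool :=
  decide (Nat.count (fun g => (!(decide (badN mul w g * N ≤ sizeN w))) = true) N = 0) &&
    decide (0 < sizeN w)

theorem primrec_memB : Primrec₂ memB :=
  Primrec.option_getD.comp Primrec.list_getElem? (Primrec.const false)

theorem primrec_lst : Primrec lst := by
  have h : Primrec fun w : List Bool => (List.range w.length).filterMap
      (fun x => bif memB w x then some x else none) :=
    Primrec.listFilterMap (Primrec.list_range.comp Primrec.list_length)
      (Primrec.cond primrec_memB (Primrec.option_some.comp Primrec.snd) (Primrec.const none))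
  refine h.of_eq fun w => ?_
  rw [lst, ← List.filterMap_eq_filter]
  congr 1
  funext x
  cases hx : memB w x <;> simp [Option.guard, hx]

theorem computable_badN {mul : ℕ → ℕ → ℕ} (hm : Computable₂ mul) :
    Computable₂ (badN mul) := by
  refine computable_count (α := List Bool × ℕ)
    (p := fun a x => memB a.1 x && !(memB a.1 (mul a.2 x))) (f := fun a => a.1.length) ?_ ?_
  · refine Primrec.and.to_comp.comp (primrec_memB.to_comp.comp
      (Computable.fst.comp Computable.fst) Computable.snd) ?_
    refine Primrec.not.to_comp.comp (primrec_memB.to_comp.comp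
      (Computable.fst.comp Computable.fst) ?_)
    exact hm.comp (Computable.snd.comp Computable.fst) Computable.snd
  · exact Computable.list_length.comp Computable.fst

theorem computable_sizeN : Computable sizeN :=
  computable_count (p := memB) primrec_memB.to_comp Computable.list_length

theorem computable_okB {mul : ℕ → ℕ → ℕ} (hm : Computable₂ mul) :
    Computable₂ (okB mul) := by
  have hle : Computable₂ fun a b : ℕ => decide (a ≤ b) := Primrec.nat_le.decide.to_comp
  have hlt : Computable₂ fun a b : ℕ => decide (a < b) := Primrec.nat_lt.decide.to_comp
  have heq : Computable₂ fun a b : ℕ => decide (a = b) :=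
    (Primrec.eq (α := ℕ)).decide.to_comp
  refine Primrec.and.to_comp.comp (heq.comp ?_ (Computable.const 0))
    (hlt.comp (Computable.const 0) (computable_sizeN.comp Computable.snd))
  refine computable_count (α := ℕ × List Bool)
    (p := fun a g => !(decide (badN mul a.2 g * a.1 ≤ sizeN a.2))) (f := fun a => a.1)
    ?_ Computable.fst
  refine Primrec.not.to_comp.comp (hle.comp ?_
    (computable_sizeN.comp (Computable.snd.comp Computable.fst)))
  exact Primrec.nat_mul.to_comp.comp
    ((computable_badN hm).comp (Computable.snd.comp Computable.fst) Computable.snd)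
    (Computable.fst.comp Computable.fst)

theorem lst_sort (w : List Bool) : (lst w).toFinset.sort (· ≤ ·) = lst w := by
  have hn : (lst w).Nodup := List.nodup_range.filter _
  rw [List.toFinset_sort (· ≤ ·) hn]
  exact (List.pairwise_le_range).filter _

theorem memB_lt {w : List Bool} {x : ℕ} (h : memB w x = true) : x < w.length := by
  by_contra hx
  simp [memB, List.getElem?_eq_none (not_lt.1 hx)] at h

theorem mem_lst {w : List Bool} {x : ℕ} : x ∈ (lst w).toFinset ↔ memB w x = true := by
  simp only [lst, List.mem_toFinset, List.mem_filter, List.mem_range]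
  exact ⟨fun h => h.2, fun h => ⟨memB_lt h, h⟩⟩

theorem sizeN_eq (w : List Bool) : sizeN w = (lst w).toFinset.card := by
  rw [sizeN, Nat.count_eq_card_filter_range]
  congr 1
  ext x
  rw [mem_lst, Finset.mem_filter, Finset.mem_range]
  exact ⟨fun h => h.2, fun h => ⟨memB_lt h, h⟩⟩

theorem badN_eq (mul : ℕ → ℕ → ℕ) (w : List Bool) (g : ℕ) :
    badN mul w g = ((lst w).toFinset.filter fun x => mul g x ∉ (lst w).toFinset).card := by
  rw [badN, Nat.count_eq_card_filter_range]
  congr 1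
  ext x
  rw [Finset.mem_filter, Finset.mem_filter, Finset.mem_range, mem_lst, mem_lst]
  constructor
  · rintro ⟨_, h⟩; simpa using h
  · intro h; exact ⟨memB_lt h.1, by simpa using h⟩

theorem okB_iff (mul : ℕ → ℕ → ℕ) (N : ℕ) (w : List Bool) :
    okB mul N w = true ↔ (∀ g < N,
      ((lst w).toFinset.filter fun x => mul g x ∉ (lst w).toFinset).card * N ≤
        (lst w).toFinset.card) ∧ (lst w).toFinset.Nonempty := by
  rw [okB, Bool.and_eq_true, decide_eq_true_eq, decide_eq_true_eq, Nat.count_eq_card_filter_range,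
    Finset.card_eq_zero, Finset.filter_eq_empty_iff, sizeN_eq, Finset.card_pos]
  simp [badN_eq]

theorem exists_word (A : Finset ℕ) : ∃ w : List Bool, (lst w).toFinset = A := by
  refine ⟨(List.range (A.sup id + 1)).map fun x => decide (x ∈ A), ?_⟩
  ext x
  rw [mem_lst, memB]
  by_cases hx : x < A.sup id + 1
  · simp [List.getElem?_range hx]
  · have hxA : x ∉ A := fun h => hx (Nat.lt_succ_of_le (Finset.le_sup (f := id) h))
    simp [List.getElem?_eq_none (l := List.range (A.sup id + 1)) (i := x) (by simpa using hx), hxA]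

theorem card_boundary {G : Type} [Group G] (e : G ≃ ℕ) (A : Finset ℕ) (g : G) :
    ((A.image e.symm).image (fun h => g * h) \ A.image e.symm).card =
      (A.filter fun x => e (e.symm (e g) * e.symm x) ∉ A).card := by
  have : (A.image e.symm).image (fun h => g * h) \ A.image e.symm =
      (A.filter fun x => e (e.symm (e g) * e.symm x) ∉ A).image (fun x => g * e.symm x) := by
    ext y
    simp only [Finset.mem_sdiff, Finset.mem_image, Finset.mem_filter, Equiv.symm_apply_apply]
    constructor
    · rintro ⟨⟨_, ⟨x, hx, rfl⟩, rfl⟩, h⟩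
      exact ⟨x, ⟨hx, fun hc => h ⟨_, hc, by simp⟩⟩, rfl⟩
    · rintro ⟨x, ⟨hx, h⟩, rfl⟩
      refine ⟨⟨_, ⟨x, hx, rfl⟩, rfl⟩, ?_⟩
      rintro ⟨z, hz, hz'⟩
      exact h (by rw [← hz']; simpa using hz)
  rw [this, Finset.card_image_of_injective]
  intro a b hab
  simpa using hab

theorem large_of_ok {G : Type} [Group G] (e : G ≃ ℕ) (A : Finset ℕ) (N : ℕ) (hA : A.Nonempty)
    (h : ∀ g < N, (A.filter fun x => e (e.symm g * e.symm x) ∉ A).card * N ≤ A.card) :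
    N ≤ A.card := by
  by_contra hlt
  push Not at hlt
  obtain ⟨a, ha⟩ := hA
  have hin : ∀ g < N, e (e.symm g * e.symm a) ∈ A := by
    intro g hg
    by_contra hc
    have hpos : 0 < (A.filter fun x => e (e.symm g * e.symm x) ∉ A).card :=
      Finset.card_pos.2 ⟨a, Finset.mem_filter.2 ⟨ha, hc⟩⟩
    have := h g hg
    have := Nat.le_mul_of_pos_left N hpos
    omega
  have := Finset.card_le_card_of_injOn (s := Finset.range N) (t := A)
    (fun g => e (e.symm g * e.symm a)) (fun g hg => hin g (by simpa using hg))
    (fun x _ y _ hxy => by simpa using hxy)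
  rw [Finset.card_range] at this
  omega

theorem exists_ok {G : Type} [Group G] (e : G ≃ ℕ) (F : ℕ → Finset G) (hF : IsFolner F) (N : ℕ) :
    ∃ w, okB (fun m n => e (e.symm m * e.symm n)) N w = true := by
  have hev : ∀ᶠ i in atTop, ∀ g ∈ Finset.range N,
      (((F i).image (fun h => e.symm g * h) \ F i).card : ℝ) / ((F i).card : ℝ)
        < 1 / ((N : ℝ) + 1) := by
    rw [Filter.eventually_all_finset]
    intro g _
    exact (hF.2 (e.symm g)).eventually (gt_mem_nhds (by positivity))
  obtain ⟨i, hi⟩ := hev.exists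
  obtain ⟨w, hw⟩ := exists_word ((F i).image e)
  have him : ((F i).image e).image e.symm = F i := by
    rw [Finset.image_image]; simp
  refine ⟨w, ?_⟩
  rw [okB_iff, hw]
  refine ⟨fun g hg => ?_, (hF.1 i).image _⟩
  have h1 := hi g (Finset.mem_range.2 hg)
  have h2 := card_boundary e ((F i).image e) (e.symm g)
  rw [him, Equiv.apply_symm_apply] at h2
  rw [← h2, Finset.card_image_of_injective _ e.injective]
  have hpos : (0 : ℝ) < (F i).card := by exact_mod_cast (hF.1 i).card_pos
  rw [div_lt_div_iff₀ hpos (by positivity)] at h1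
  have h3 : (((F i).image (fun h => e.symm g * h) \ F i).card : ℝ) * N ≤ (F i).card := by
    have : (0 : ℝ) ≤ (((F i).image (fun h => e.symm g * h) \ F i).card : ℝ) := by positivity
    linarith
  exact_mod_cast h3

/-- Decode a number as a word. -/
def decW (m : ℕ) : List Bool := (Encodable.decode (α := List Bool) m).getD []

theorem decW_encode (w : List Bool) : decW (Encodable.encode w) = w := by
  simp [decW]

theorem primrec_decW : Primrec decW :=
  Primrec.option_getD.comp Primrec.decode (Primrec.const [])

/-- The machine searching for the first good set. -/
def machine (mul : ℕ → ℕ → ℕ) : List Bool →. List Bool := fun y =>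
  (Nat.rfind fun m => Part.some (okB mul (y.length * y.length) (decW m))).map
    fun m => Nat.bits (Encodable.encode (lst (decW m)))

theorem partrec_machine {mul : ℕ → ℕ → ℕ} (hm : Computable₂ mul) : Partrec (machine mul) := by
  refine Partrec.map (Partrec.rfind ?_) ?_
  · have : Computable₂ fun (y : List Bool) (m : ℕ) =>
        okB mul (y.length * y.length) (decW m) := by
      refine (computable_okB hm).comp ?_ (primrec_decW.to_comp.comp Computable.snd)
      exact Primrec.nat_mul.to_comp.comp (Computable.list_length.comp Computable.fst)
        (Computable.list_length.comp Computable.fst)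
    exact this.partrec₂
  · exact (primrec_bits.comp (Primrec.encode.comp
      (primrec_lst.comp (primrec_decW.comp Primrec.snd)))).to_comp

theorem machine_spec (mul : ℕ → ℕ → ℕ) (h : ∀ N, ∃ w, okB mul N w = true) (n : ℕ) :
    ∃ w, okB mul (n * n) w = true ∧
      Nat.bits (Encodable.encode (lst w)) ∈ machine mul (List.replicate n true) := by
  obtain ⟨w, hw⟩ := h (n * n)
  obtain ⟨m, hm, -⟩ := Nat.rfind_min' (p := fun m => okB mul (n * n) (decW m))
    (m := Encodable.encode w) (by simpa [decW_encode] using hw)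
  refine ⟨decW m, by simpa using (Nat.rfind_spec hm), ?_⟩
  rw [machine, Part.mem_map_iff]
  refine ⟨m, ?_, rfl⟩
  rw [List.length_replicate]
  exact hm

end Helpers

/-- Every computable amenable group admits a modest Følner sequence. -/
theorem statement6 {G : Type} [Group G]
    (e : G ≃ ℕ) (hGcomp : ComputableMul e)
    (u : List Bool →. List Bool) (hu : Optimal u)
    (hamen : ∃ F : ℕ → Finset G, IsFolner F) :
    ∃ F : ℕ → Finset G, IsFolner F ∧ Modest u e F := by
  obtain ⟨F0, hF0⟩ := hamen
  choose w hok hmach using machine_spec _ (exists_ok e F0 hF0)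
  obtain ⟨K, hK⟩ := hu.2 _ (partrec_machine hGcomp)
  have hA : ∀ n, _ := fun n => (okB_iff _ _ _).1 (hok n)
  have hbig : ∀ n, n * n ≤ (lst (w n)).toFinset.card := fun n =>
    large_of_ok e _ _ (hA n).2 (hA n).1
  have hcard : ∀ n, ((lst (w n)).toFinset.image e.symm).card = (lst (w n)).toFinset.card :=
    fun n => Finset.card_image_of_injective _ e.symm.injective
  refine ⟨fun n => (lst (w n)).toFinset.image e.symm, ⟨fun n => (hA n).2.image _, fun g => ?_⟩, ?_⟩
  · refine squeeze_zero' (Eventually.of_forall fun n => by positivity) ?_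
      tendsto_one_div_atTop_nhds_zero_nat
    filter_upwards [eventually_gt_atTop (e g)] with n hn
    have hn1 : 1 ≤ n := by omega
    have hg : e g < n * n := lt_of_lt_of_le hn (Nat.le_mul_self n)
    have h1 := (hA n).1 (e g) hg
    rw [← card_boundary] at h1
    rw [hcard]
    have hpos : (0 : ℝ) < (lst (w n)).toFinset.card := by exact_mod_cast (hA n).2.card_pos
    rw [div_le_div_iff₀ hpos (by exact_mod_cast hn1)]
    have h2 := le_trans (Nat.mul_le_mul_left _ (Nat.le_mul_self n)) h1
    rw [one_mul]
    exact_mod_cast h2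
  · have hC : ∀ n, KC u (encFinset e ((lst (w n)).toFinset.image e.symm)) ≤ n + K := by
      intro n
      have him : ((lst (w n)).toFinset.image e.symm).image e = (lst (w n)).toFinset := by
        rw [Finset.image_image]; simp
      rw [encFinset, him, encFinsetNat, lst_sort, KC]
      simpa using hK _ _ (hmach n)
    have hlim : Tendsto (fun n : ℕ => (1 + (K : ℝ)) * (1 / (n : ℝ))) atTop (nhds 0) := by
      simpa using tendsto_one_div_atTop_nhds_zero_nat.const_mul (1 + (K : ℝ))
    refine squeeze_zero' (Eventually.of_forall fun n => by positivity) ?_ hlim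
    filter_upwards [eventually_ge_atTop 1] with n hn
    have hn' : (1 : ℝ) ≤ n := by exact_mod_cast hn
    have hb : (n : ℝ) * n ≤ ((lst (w n)).toFinset.card : ℝ) := by exact_mod_cast hbig n
    have hc : (KC u (encFinset e ((lst (w n)).toFinset.image e.symm)) : ℝ) ≤ n + K := by
      exact_mod_cast hC n
    have hpos : (0 : ℝ) < (lst (w n)).toFinset.card := by exact_mod_cast (hA n).2.card_pos
    rw [hcard, mul_one_div, div_le_div_iff₀ hpos (by linarith)]
    have hK0 : (0 : ℝ) ≤ K := by positivity
    calc _ ≤ ((n : ℝ) + K) * n := by gcongr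
      _ ≤ (1 + (K : ℝ)) * (n * n) := by nlinarith [mul_nonneg hK0 (by linarith : (0:ℝ) ≤ n)]
      _ ≤ _ := by gcongr

end Brudno
end

section
/- Let G be a computable amenable group and (F_i) a Følner sequence in G. For every rational ε > 0 there exist indices j_1, …, j_k, a number N, and a partial computable function R from finite subsets of G to k-tuples of finite subsets of G such that, for every i > N, R(F_i) is defined, and writing (R_1, …, R_k) := R(F_i): (1) ⋃_{s=1}^k F_{j_s} R_s ⊆ F_i; (2) |F_i \ ⋃_{s=1}^k F_{j_s} R_s| ≤ ε |F_i|; (3) ∑_{s=1}^k |F_{j_s}|·|R_s| ≤ (1+ε) |⋃_{s=1}^k F_{j_s} R_s|; (4) ∑_{s=1}^k |F_{j_s}|·|R_s| ≤ (1+ε) |F_i|. -/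
open Filter MeasureTheory
open scoped Pointwise Classical

namespace Brudno

/-- Greedy step: a maximal family of almost disjoint translates. -/
lemma greedy {G : Type} [Group G] (D K U0 : Finset G) (hK : K.Nonempty) (hU : U0 ⊆ D)
    (δ : ℝ) (hδ0 : 0 < δ) (hδ1 : δ < 1) :
    ∃ C : Finset G, U0 ∪ K * C ⊆ D ∧
      (U0.card : ℝ) + (1 - δ) * (K.card * C.card) ≤ ((U0 ∪ K * C).card : ℝ) ∧
      ∀ c : G, (∀ k ∈ K, k * c ∈ D) →
        δ * K.card ≤ ((K.filter (fun k => k * c ∈ U0 ∪ K * C)).card : ℝ) := by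
  let S : Finset (Finset G) := (K⁻¹ * D).powerset.filter (fun C => U0 ∪ K * C ⊆ D ∧
      (U0.card : ℝ) + (1 - δ) * (K.card * C.card) ≤ ((U0 ∪ K * C).card : ℝ))
  have hS : S.Nonempty := ⟨∅, by simp [S, hU]⟩
  obtain ⟨C, hC, hmax⟩ := S.exists_max_image Finset.card hS
  have hC' := (Finset.mem_filter.mp hC).2
  refine ⟨C, hC'.1, hC'.2, ?_⟩
  intro c hc
  by_contra hlt
  push Not at hlt
  have hKpos : (0 : ℝ) < K.card := by exact_mod_cast hK.card_pos
  have hcC : c ∉ C := by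
    intro hcC
    have : K.filter (fun k => k * c ∈ U0 ∪ K * C) = K := by
      apply Finset.filter_true_of_mem
      intro k hk
      exact Finset.mem_union_right _ (Finset.mul_mem_mul hk hcC)
    rw [this] at hlt
    nlinarith
  have hin : insert c C ∈ S := by
    have hsub : U0 ∪ K * insert c C ⊆ D := by
      intro x hx
      rcases Finset.mem_union.mp hx with hx | hx
      · exact hU hx
      · obtain ⟨k, hk, y, hy, rfl⟩ := Finset.mem_mul.mp hx
        rcases Finset.mem_insert.mp hy with rfl | hy
        · exact hc k hk
        · exact hC'.1 (Finset.mem_union_right _ (Finset.mul_mem_mul hk hy))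
    refine Finset.mem_filter.mpr ⟨?_, hsub, ?_⟩
    · rw [Finset.mem_powerset]
      intro y hy
      obtain ⟨k, hk⟩ := hK
      have : k * y ∈ D := hsub (Finset.mem_union_right _ (Finset.mul_mem_mul hk hy))
      exact Finset.mem_mul.mpr ⟨k⁻¹, Finset.inv_mem_inv hk, k * y, this, by group⟩
    · have hsplit := Finset.card_filter_add_card_filter_not (s := K)
        (fun k => k * c ∈ U0 ∪ K * C)
      have hnew : (U0 ∪ K * C).card + (K.filter (fun k => ¬ k * c ∈ U0 ∪ K * C)).card ≤
          (U0 ∪ K * insert c C).card := by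
        rw [← Finset.card_image_of_injective (K.filter (fun k => ¬ k * c ∈ U0 ∪ K * C))
          (mul_left_injective c), ← Finset.card_union_of_disjoint]
        · apply Finset.card_le_card
          intro x hx
          rcases Finset.mem_union.mp hx with hx | hx
          · exact Finset.union_subset_union_right
              (Finset.mul_subset_mul_left (Finset.subset_insert c C)) hx
          · obtain ⟨k, hk, rfl⟩ := Finset.mem_image.mp hx
            exact Finset.mem_union_right _ (Finset.mul_mem_mul (Finset.mem_filter.mp hk).1
              (Finset.mem_insert_self c C))
        · rw [Finset.disjoint_left]
          intro x hx hx2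
          obtain ⟨k, hk, rfl⟩ := Finset.mem_image.mp hx2
          exact (Finset.mem_filter.mp hk).2 hx
      have h1 : ((K.filter (fun k => k * c ∈ U0 ∪ K * C)).card : ℝ) +
          ((K.filter (fun k => ¬ k * c ∈ U0 ∪ K * C)).card : ℝ) = K.card := by
        exact_mod_cast hsplit
      have h2 : ((U0 ∪ K * C).card : ℝ) +
          ((K.filter (fun k => ¬ k * c ∈ U0 ∪ K * C)).card : ℝ) ≤
          ((U0 ∪ K * insert c C).card : ℝ) := by exact_mod_cast hnew
      rw [Finset.card_insert_of_notMem hcC]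
      push_cast
      nlinarith [hC'.2]
  have := hmax _ hin
  rw [Finset.card_insert_of_notMem hcC] at this
  omega

/-- Double counting: one greedy step covers a `δ`-fraction of the interior of the rest. -/
lemma progress {G : Type} [Group G] (K U0 U1 I : Finset G) (hK : K.Nonempty)
    (δ : ℝ) (hI : ∀ c ∈ I, ∀ k ∈ K, k * c ∉ U0)
    (h : ∀ c ∈ I, δ * K.card ≤ ((K.filter (fun k => k * c ∈ U1)).card : ℝ)) :
    δ * I.card ≤ ((U1 \ U0).card : ℝ) := by
  have hKpos : (0 : ℝ) < K.card := by exact_mod_cast hK.card_pos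
  have h1 : ∑ c ∈ I, (K.filter (fun k => k * c ∈ U1)).card ≤ K.card * (U1 \ U0).card := by
    simp_rw [Finset.card_filter]
    rw [Finset.sum_comm, ← smul_eq_mul]
    apply Finset.sum_le_card_nsmul
    intro k hk
    rw [← Finset.card_filter]
    apply Finset.card_le_card_of_injOn (fun c => k * c)
    · intro c hc
      have hc := Finset.mem_filter.mp hc
      exact Finset.mem_sdiff.mpr ⟨hc.2, hI c hc.1 k hk⟩
    · intro a _ b _ hab
      exact mul_left_cancel hab
  have h2 : (I.card : ℝ) * (δ * K.card) ≤
      ∑ c ∈ I, ((K.filter (fun k => k * c ∈ U1)).card : ℝ) := by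
    rw [← nsmul_eq_mul]
    exact Finset.card_nsmul_le_sum _ _ _ h
  have h3 : ∑ c ∈ I, ((K.filter (fun k => k * c ∈ U1)).card : ℝ) ≤
      K.card * ((U1 \ U0).card : ℝ) := by exact_mod_cast h1
  have h4 : (K.card : ℝ) * (δ * I.card) ≤ K.card * ((U1 \ U0).card : ℝ) := by linarith
  exact le_of_mul_le_mul_left h4 hKpos

/-- The quasi-tiling induction. -/
lemma tiling {G : Type} [Group G] (D : Finset G) (δ η θ : ℝ) (hδ0 : 0 < δ) (hδ1 : δ ≤ 1 / 2)
    (hη : 0 ≤ η) (hθ : 0 ≤ θ) :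
    ∀ (k : ℕ) (K : Fin k → Finset G), (∀ s, (K s).Nonempty) →
    (∀ a b, a < b → ((((K b)⁻¹ * K a) \ K a).card : ℝ) ≤ η * (K a).card) →
    (∀ s, ((D.filter (fun c => ∃ k ∈ K s, k * c ∉ D)).card : ℝ) ≤ θ * D.card) →
    ∀ (U0 : Finset G) (W : ℝ), U0 ⊆ D → (1 - δ) * W ≤ U0.card →
    (∀ s, ((D.filter (fun c => c ∉ U0 ∧ ∃ k ∈ K s, k * c ∈ U0)).card : ℝ) ≤ η * W) →
    ∃ Rs : Fin k → Finset G,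
      (U0 ∪ Finset.univ.biUnion fun s => K s * Rs s) ⊆ D ∧
      (1 - δ) * (W + ∑ s, ((K s).card : ℝ) * (Rs s).card) ≤
        ((U0 ∪ Finset.univ.biUnion fun s => K s * Rs s).card : ℝ) ∧
      ((D \ (U0 ∪ Finset.univ.biUnion fun s => K s * Rs s)).card : ℝ) -
          (θ + 2 * η) * D.card ≤
        (1 - δ) ^ k * (((D \ U0).card : ℝ) - (θ + 2 * η) * D.card) := by
  intro k
  induction k with
  | zero =>
    intro K _ _ _ U0 W hU hW _
    exact ⟨fun _ => ∅, by simpa using hU, by simpa using hW, by simp⟩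
  | succ n ih =>
    intro K hK hinv hD U0 W hU hW hbad
    obtain ⟨C, hC1, hC2, hC3⟩ := greedy D (K 0) U0 (hK 0) hU δ hδ0 (by linarith)
    set U1 := U0 ∪ K 0 * C with hU1
    have hU01 : U0 ⊆ U1 := Finset.subset_union_left
    -- progress of this step
    have hprog : ((D \ U1).card : ℝ) - (θ + 2 * η) * D.card ≤
        (1 - δ) * (((D \ U0).card : ℝ) - (θ + 2 * η) * D.card) := by
      set I := D.filter (fun c => c ∉ U0 ∧ ∀ k ∈ K 0, k * c ∈ D ∧ k * c ∉ U0) with hI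
      have h1 := progress (K 0) U0 U1 I (hK 0) δ
        (fun c hc k hk => ((Finset.mem_filter.mp hc).2.2 k hk).2)
        (fun c hc => hC3 c (fun k hk => ((Finset.mem_filter.mp hc).2.2 k hk).1))
      have hsub : D \ U0 ⊆ I ∪ (D.filter (fun c => ∃ k ∈ K 0, k * c ∉ D) ∪
          D.filter (fun c => c ∉ U0 ∧ ∃ k ∈ K 0, k * c ∈ U0)) := by
        intro c hc
        obtain ⟨hcD, hcU⟩ := Finset.mem_sdiff.mp hc
        by_cases h1 : ∃ k ∈ K 0, k * c ∉ D
        · exact Finset.mem_union_right _ (Finset.mem_union_left _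
            (Finset.mem_filter.mpr ⟨hcD, h1⟩))
        by_cases h2 : ∃ k ∈ K 0, k * c ∈ U0
        · exact Finset.mem_union_right _ (Finset.mem_union_right _
            (Finset.mem_filter.mpr ⟨hcD, hcU, h2⟩))
        push Not at h1 h2
        exact Finset.mem_union_left _ (Finset.mem_filter.mpr
          ⟨hcD, hcU, fun k hk => ⟨h1 k hk, h2 k hk⟩⟩)
      have hcard : ((D \ U0).card : ℝ) ≤ I.card +
          ((D.filter (fun c => ∃ k ∈ K 0, k * c ∉ D)).card +
          (D.filter (fun c => c ∉ U0 ∧ ∃ k ∈ K 0, k * c ∈ U0)).card) := by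
        have := (Finset.card_le_card hsub).trans ((Finset.card_union_le _ _).trans
          (Nat.add_le_add_left (Finset.card_union_le _ _) _))
        exact_mod_cast this
      have hUD : (U0.card : ℝ) ≤ D.card := by exact_mod_cast Finset.card_le_card hU
      have hW2 : W ≤ 2 * D.card := by nlinarith [(Nat.cast_nonneg (D.card) : (0:ℝ) ≤ D.card)]
      have hd0 : ((D \ U1).card : ℝ) + (U1 \ U0).card = (D \ U0).card := by
        have hh : D \ U0 = (D \ U1) ∪ (U1 \ U0) := by
          ext x
          simp only [Finset.mem_sdiff, Finset.mem_union]
          have := @hU01 x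
          have := @hC1 x
          tauto
        rw [hh, Finset.card_union_of_disjoint]
        · push_cast; ring
        · rw [Finset.disjoint_left]
          intro x hx hx2
          exact (Finset.mem_sdiff.mp hx).2 (Finset.mem_sdiff.mp hx2).1
      have a1 := hD 0
      have a2 := hbad 0
      have a3 : η * W ≤ η * (2 * D.card) := mul_le_mul_of_nonneg_left hW2 hη
      have a4 : ((D \ U0).card : ℝ) - (θ + 2 * η) * D.card ≤ I.card := by linarith
      have a5 := mul_le_mul_of_nonneg_left a4 hδ0.le
      linarith
    obtain ⟨Rs, hR1, hR2, hR3⟩ := ih (fun s => K s.succ) (fun s => hK _)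
      (fun a b hab => hinv _ _ (Fin.succ_lt_succ_iff.mpr hab)) (fun s => hD _) U1
      (W + (K 0).card * C.card) hC1 (by linarith) (by
        intro s
        have hsub : D.filter (fun c => c ∉ U1 ∧ ∃ k ∈ K s.succ, k * c ∈ U1) ⊆
            D.filter (fun c => c ∉ U0 ∧ ∃ k ∈ K s.succ, k * c ∈ U0) ∪
            C.biUnion (fun c => (((K s.succ)⁻¹ * K 0) \ K 0).image (fun x => x * c)) := by
          intro c hc
          obtain ⟨hcD, hcU, k, hk, hkc⟩ := Finset.mem_filter.mp hc
          rcases Finset.mem_union.mp hkc with hkc | hkc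
          · exact Finset.mem_union_left _ (Finset.mem_filter.mpr
              ⟨hcD, fun h => hcU (hU01 h), k, hk, hkc⟩)
          · obtain ⟨a, ha, y, hy, hay⟩ := Finset.mem_mul.mp hkc
            refine Finset.mem_union_right _ (Finset.mem_biUnion.mpr ⟨y, hy, ?_⟩)
            have hce : k⁻¹ * a * y = c := by rw [mul_assoc, hay]; group
            refine Finset.mem_image.mpr ⟨k⁻¹ * a, Finset.mem_sdiff.mpr
              ⟨Finset.mul_mem_mul (Finset.inv_mem_inv hk) ha, ?_⟩, hce⟩
            intro hmem
            apply hcU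
            rw [← hce]
            exact Finset.mem_union_right _ (Finset.mul_mem_mul hmem hy)
        have hb : (C.biUnion (fun c => (((K s.succ)⁻¹ * K 0) \ K 0).image
            (fun x => x * c))).card ≤ C.card * (((K s.succ)⁻¹ * K 0) \ K 0).card :=
          Finset.card_biUnion_le_card_mul _ _ _ (fun c _ => Finset.card_image_le)
        have h1 := (Finset.card_le_card hsub).trans ((Finset.card_union_le _ _).trans
          (Nat.add_le_add_left hb _))
        have h2 : ((D.filter (fun c => c ∉ U1 ∧ ∃ k ∈ K s.succ, k * c ∈ U1)).card : ℝ) ≤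
            (D.filter (fun c => c ∉ U0 ∧ ∃ k ∈ K s.succ, k * c ∈ U0)).card +
            C.card * (((K s.succ)⁻¹ * K 0) \ K 0).card := by exact_mod_cast h1
        have h3 := hbad s.succ
        have h4 := mul_le_mul_of_nonneg_left (hinv 0 s.succ (Fin.succ_pos s))
          (Nat.cast_nonneg (C.card) : (0 : ℝ) ≤ C.card)
        linarith)
    have hun : (U0 ∪ Finset.univ.biUnion fun s : Fin (n+1) =>
        K s * (Fin.cons C Rs : Fin (n+1) → Finset G) s) =
        U1 ∪ Finset.univ.biUnion fun s => K s.succ * Rs s := by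
      ext x
      simp only [hU1, Finset.mem_union, Finset.mem_biUnion, Finset.mem_univ, true_and,
        Fin.exists_fin_succ, Fin.cons_zero, Fin.cons_succ, or_assoc]
    refine ⟨Fin.cons C Rs, ?_, ?_, ?_⟩
    · rw [hun]; exact hR1
    · rw [hun, Fin.sum_univ_succ]
      simp only [Fin.cons_zero, Fin.cons_succ]
      rw [← add_assoc]; exact hR2
    · rw [hun, pow_succ]
      refine hR3.trans ?_
      rw [mul_assoc]
      exact mul_le_mul_of_nonneg_left hprog (pow_nonneg (by linarith) _)

lemma folner_inv {G : Type} [Group G] (K : Finset G) (F : ℕ → Finset G)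
    (hFn : ∀ i, (F i).Nonempty)
    (hF : ∀ g : G, Tendsto (fun i => (((F i).image (fun h => g * h) \ F i).card : ℝ) /
      ((F i).card : ℝ)) atTop (nhds 0)) (η : ℝ) (hη : 0 < η) :
    ∀ᶠ i in atTop, (((K * F i) \ F i).card : ℝ) ≤ η * (F i).card := by
  have hη' : 0 < η / (K.card + 1) := by positivity
  have : ∀ᶠ i in atTop, ∀ g ∈ K, (((F i).image (fun h => g * h) \ F i).card : ℝ) /
      ((F i).card : ℝ) < η / (K.card + 1) := by
    rw [Filter.eventually_all_finset]
    intro g _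
    exact (hF g).eventually (gt_mem_nhds hη')
  filter_upwards [this] with i hi
  have hpos : (0 : ℝ) < (F i).card := by exact_mod_cast (hFn i).card_pos
  have hsub : (K * F i) \ F i ⊆ K.biUnion (fun g => (F i).image (fun h => g * h) \ F i) := by
    intro x hx
    obtain ⟨hx1, hx2⟩ := Finset.mem_sdiff.mp hx
    obtain ⟨g, hg, y, hy, rfl⟩ := Finset.mem_mul.mp hx1
    exact Finset.mem_biUnion.mpr ⟨g, hg, Finset.mem_sdiff.mpr
      ⟨Finset.mem_image.mpr ⟨y, hy, rfl⟩, hx2⟩⟩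
  have h1 : (((K * F i) \ F i).card : ℝ) ≤
      ∑ g ∈ K, (((F i).image (fun h => g * h) \ F i).card : ℝ) := by
    exact_mod_cast (Finset.card_le_card hsub).trans Finset.card_biUnion_le
  have h2 : ∑ g ∈ K, (((F i).image (fun h => g * h) \ F i).card : ℝ) ≤
      K.card • (η / (K.card + 1) * (F i).card) := by
    apply Finset.sum_le_card_nsmul
    intro g hg
    exact ((div_lt_iff₀ hpos).mp (hi g hg)).le
  refine h1.trans (h2.trans ?_)
  rw [nsmul_eq_mul, ← mul_assoc]
  apply mul_le_mul_of_nonneg_right _ hpos.le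
  rw [mul_div_assoc', div_le_iff₀ (by positivity)]
  nlinarith

lemma bad_le {G : Type} [Group G] (K D : Finset G) :
    (D.filter (fun c => ∃ k ∈ K, k * c ∉ D)).card ≤ K.card * ((K * D) \ D).card := by
  have hsub : D.filter (fun c => ∃ k ∈ K, k * c ∉ D) ⊆
      K.biUnion (fun k => ((K * D) \ D).image (fun x => k⁻¹ * x)) := by
    intro c hc
    obtain ⟨hcD, k, hk, hkc⟩ := Finset.mem_filter.mp hc
    exact Finset.mem_biUnion.mpr ⟨k, hk, Finset.mem_image.mpr ⟨k * c,
      Finset.mem_sdiff.mpr ⟨Finset.mul_mem_mul hk hcD, hkc⟩, by group⟩⟩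
  exact (Finset.card_le_card hsub).trans
    (Finset.card_biUnion_le_card_mul _ _ _ (fun c _ => Finset.card_image_le))

lemma exists_idx {G : Type} [Group G] (F : ℕ → Finset G) (hFn : ∀ i, (F i).Nonempty)
    (hF : ∀ g : G, Tendsto (fun i => (((F i).image (fun h => g * h) \ F i).card : ℝ) /
      ((F i).card : ℝ)) atTop (nhds 0)) (η : ℝ) (hη : 0 < η) (k : ℕ) :
    ∃ j : Fin k → ℕ, ∀ a b, a < b →
      ((((F (j b))⁻¹ * F (j a)) \ F (j a)).card : ℝ) ≤ η * (F (j a)).card := by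
  induction k with
  | zero => exact ⟨fun _ => 0, fun a => a.elim0⟩
  | succ n ih =>
    obtain ⟨j, hj⟩ := ih
    have : ∀ᶠ i in atTop, ∀ b : Fin n,
        ((((F (j b))⁻¹ * F i) \ F i).card : ℝ) ≤ η * (F i).card := by
      rw [Filter.eventually_all]
      intro b
      exact folner_inv _ F hFn hF η hη
    obtain ⟨i, hi⟩ := this.exists
    refine ⟨Fin.cons i j, ?_⟩
    intro a b hab
    induction b using Fin.cases with
    | zero => exact absurd hab (Fin.not_lt_zero a)
    | succ b =>
      induction a using Fin.cases with
      | zero => simpa using hi b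
      | succ a => simpa using hj a b (Fin.succ_lt_succ_iff.mp hab)

/-- Non-effective Ornstein-Weiss covering lemma. -/
lemma ornstein_weiss {G : Type} [Group G] (F : ℕ → Finset G) (hFn : ∀ i, (F i).Nonempty)
    (hF : ∀ g : G, Tendsto (fun i => (((F i).image (fun h => g * h) \ F i).card : ℝ) /
      ((F i).card : ℝ)) atTop (nhds 0)) (ε : ℝ) (hε : 0 < ε) :
    ∃ (k : ℕ) (j : Fin k → ℕ) (N : ℕ), ∀ i : ℕ, N < i → ∃ Rs : Fin k → Finset G,
        (Finset.univ.biUnion fun s : Fin k => F (j s) * Rs s) ⊆ F i ∧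
        (((F i \ Finset.univ.biUnion fun s : Fin k => F (j s) * Rs s)).card : ℝ) ≤
          ε * ((F i).card : ℝ) ∧
        (∑ s : Fin k, ((F (j s)).card : ℝ) * ((Rs s).card : ℝ)) ≤
          (1 + ε) * (((Finset.univ.biUnion fun s : Fin k => F (j s) * Rs s)).card : ℝ) := by
  set δ : ℝ := min (1 / 2) (ε / (1 + ε)) with hδ
  have hδ0 : 0 < δ := lt_min (by norm_num) (by positivity)
  have hδ1 : δ ≤ 1 / 2 := min_le_left _ _
  have hδε : 1 ≤ (1 + ε) * (1 - δ) := by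
    have h : δ ≤ ε / (1 + ε) := min_le_right _ _
    rw [le_div_iff₀ (by positivity)] at h
    nlinarith
  obtain ⟨k, hk⟩ := exists_pow_lt_of_lt_one (half_pos hε) (show 1 - δ < 1 by linarith)
  obtain ⟨j, hj⟩ := exists_idx F hFn hF (ε / 8) (by positivity) k
  have hev : ∀ᶠ i in atTop, ∀ s : Fin k,
      (((F (j s) * F i) \ F i).card : ℝ) ≤ (ε / 4) / (F (j s)).card * (F i).card := by
    rw [Filter.eventually_all]
    intro s
    have : (0 : ℝ) < (F (j s)).card := by exact_mod_cast (hFn (j s)).card_pos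
    exact folner_inv _ F hFn hF _ (by positivity)
  obtain ⟨N, hN⟩ := eventually_atTop.mp hev
  refine ⟨k, j, N, fun i hi => ?_⟩
  obtain ⟨Rs, h1, h2, h3⟩ := tiling (F i) δ (ε / 8) (ε / 4) hδ0 hδ1 (by positivity)
    (by positivity) k (fun s => F (j s)) (fun s => hFn _) hj (by
      intro s
      have hb : (((F i).filter (fun c => ∃ k ∈ F (j s), k * c ∉ F i)).card : ℝ) ≤
          (F (j s)).card * ((F (j s) * F i) \ F i).card := by
        exact_mod_cast bad_le (F (j s)) (F i)
      have hp : (0 : ℝ) < (F (j s)).card := by exact_mod_cast (hFn (j s)).card_pos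
      refine hb.trans ((mul_le_mul_of_nonneg_left (hN i hi.le s) hp.le).trans (le_of_eq ?_))
      field_simp) ∅ 0 (by simp) (by simp) (by simp)
  simp only [Finset.empty_union, Finset.sdiff_empty, zero_add] at h1 h2 h3
  refine ⟨Rs, h1, ?_, ?_⟩
  · have hD : (0 : ℝ) ≤ (F i).card := Nat.cast_nonneg _
    have h4 : (1 - δ) ^ k * (((F i).card : ℝ) - (ε / 4 + 2 * (ε / 8)) * (F i).card) ≤
        (ε / 2) * (F i).card := by
      have hp : 0 ≤ (1 - δ) ^ k := pow_nonneg (by linarith) _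
      calc _ ≤ (1 - δ) ^ k * ((F i).card : ℝ) :=
            mul_le_mul_of_nonneg_left (by nlinarith) hp
        _ ≤ _ := mul_le_mul_of_nonneg_right hk.le hD
    linarith
  · have hs : 0 ≤ ∑ s : Fin k, ((F (j s)).card : ℝ) * ((Rs s).card : ℝ) :=
      Finset.sum_nonneg (fun s _ => by positivity)
    have := mul_le_mul_of_nonneg_left h2 (show 0 ≤ 1 + ε by linarith)
    nlinarith [mul_le_mul_of_nonneg_right hδε hs]

/-- Search data: a list of pairs (tuple position, code), a bound, a time bound. -/
abbrev SData := List (ℕ × ℕ) × (ℕ × ℕ)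

/-- The sorted list of codes in position `s` of the tuple described by `d`. -/
def row (d : SData) (s : ℕ) : List ℕ :=
  (List.range d.2.1).filter (fun x => decide ((s, x) ∈ d.1))

/-- The list of (time bounded) products. -/
def prods (c : Nat.Partrec.Code) (B : List (ℕ × ℕ)) (d : SData) : List (Option ℕ) :=
  B.flatMap (fun p => (row d p.1).map (fun r => Nat.Partrec.Code.evaln d.2.2 c (Nat.pair p.2 r)))

/-- How many members of `f` are products. -/
def hits (c : Nat.Partrec.Code) (B : List (ℕ × ℕ)) (f : List ℕ) (d : SData) : ℕ :=
  (f.filter (fun x => decide (some x ∈ prods c B d))).length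

/-- The primitive recursive test. -/
def Good (c : Nat.Partrec.Code) (B : List (ℕ × ℕ)) (p q : ℕ) (f : List ℕ) (d : SData) : Prop :=
  (∀ y ∈ prods c B d, ∃ x ∈ f, some x = y) ∧
  f.length * q ≤ p * f.length + hits c B f d * q ∧
  (prods c B d).length * q ≤ (q + p) * hits c B f d

/-- The code of the resulting tuple. -/
def outp (k : ℕ) (d : SData) : ℕ :=
  Encodable.encode ((List.range k).map (fun s => Encodable.encode (row d s)))

lemma mem_prim {α : Type} [Primcodable α] :
    PrimrecRel (fun (L : List α) (b : α) => b ∈ L) := by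
  refine (PrimrecRel.exists_mem_list (R := fun a b : α => a = b) Primrec.eq).of_eq ?_
  intro L b
  simp

lemma row_prim : Primrec₂ row := by
  have hR : PrimrecRel (fun (x : ℕ) (b : List (ℕ × ℕ) × ℕ) => (b.2, x) ∈ b.1) :=
    PrimrecRel.comp₂ mem_prim (Primrec.fst.comp Primrec.snd)
      ((Primrec.snd.comp Primrec.snd).pair Primrec.fst)
  have h := PrimrecRel.listFilter hR
  exact (h.comp (Primrec.list_range.comp (Primrec.fst.comp (Primrec.snd.comp Primrec.fst)))
    ((Primrec.fst.comp Primrec.fst).pair Primrec.snd) :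
    Primrec fun a : SData × ℕ => row a.1 a.2)

lemma prods_prim (c : Nat.Partrec.Code) (B : List (ℕ × ℕ)) : Primrec (prods c B) := by
  unfold prods
  refine Primrec.list_flatMap (Primrec.const B) ?_
  refine Primrec.list_map (f := fun a : SData × (ℕ × ℕ) => row a.1 a.2.1)
    (row_prim.comp Primrec.fst (Primrec.fst.comp Primrec.snd)) ?_
  have h1 : Primrec fun a : (SData × (ℕ × ℕ)) × ℕ => a.1.1.2.2 :=
    Primrec.snd.comp (Primrec.snd.comp (Primrec.fst.comp Primrec.fst))
  have h2 : Primrec fun a : (SData × (ℕ × ℕ)) × ℕ => Nat.pair a.1.2.2 a.2 :=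
    Primrec₂.natPair.comp (Primrec.snd.comp (Primrec.snd.comp Primrec.fst)) Primrec.snd
  exact Nat.Partrec.Code.primrec_evaln.comp ((h1.pair (Primrec.const c)).pair h2)

lemma hits_prim (c : Nat.Partrec.Code) (B : List (ℕ × ℕ)) : Primrec₂ (hits c B) := by
  have hR : PrimrecRel (fun (x : ℕ) (d : SData) => some x ∈ prods c B d) :=
    PrimrecRel.comp₂ mem_prim ((prods_prim c B).comp Primrec.snd)
      (Primrec.option_some.comp Primrec.fst)
  exact Primrec.list_length.comp (PrimrecRel.listFilter hR)

lemma good_prim (c : Nat.Partrec.Code) (B : List (ℕ × ℕ)) (p q : ℕ) :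
    PrimrecPred (fun a : List ℕ × SData => Good c B p q a.1 a.2) := by
  have hh : Primrec fun a : List ℕ × SData => hits c B a.1 a.2 :=
    (hits_prim c B).comp Primrec.fst Primrec.snd
  have hp : Primrec fun a : List ℕ × SData => prods c B a.2 :=
    (prods_prim c B).comp Primrec.snd
  have hl : Primrec fun a : List ℕ × SData => a.1.length :=
    Primrec.list_length.comp Primrec.fst
  refine PrimrecPred.and ?_ (PrimrecPred.and ?_ ?_)
  · have h1 : PrimrecRel (fun (x : ℕ) (y : Option ℕ) => some x = y) :=
      PrimrecRel.comp₂ Primrec.eq (Primrec.option_some.comp Primrec.fst) Primrec.snd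
    have h2 := PrimrecRel.exists_mem_list h1
    have h3 : PrimrecRel (fun (y : Option ℕ) (L : List ℕ) => ∃ x ∈ L, some x = y) :=
      PrimrecRel.comp₂ h2 Primrec.snd Primrec.fst
    exact (PrimrecRel.forall_mem_list h3).comp hp Primrec.fst
  · exact Primrec.nat_le.comp (Primrec.nat_mul.comp hl (Primrec.const q))
      (Primrec.nat_add.comp (Primrec.nat_mul.comp (Primrec.const p) hl)
        (Primrec.nat_mul.comp hh (Primrec.const q)))
  · exact Primrec.nat_le.comp
      (Primrec.nat_mul.comp (Primrec.list_length.comp hp) (Primrec.const q))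
      (Primrec.nat_mul.comp (Primrec.const (q + p)) hh)

lemma outp_prim (k : ℕ) : Primrec (outp k) := by
  refine Primrec.encode.comp (Primrec.list_map (Primrec.const (List.range k)) ?_)
  exact Primrec.encode.comp row_prim

/-- Search through all data passing the test. -/
lemma search (c : Nat.Partrec.Code) (B : List (ℕ × ℕ)) (k p q : ℕ) :
    ∃ R : ℕ →. ℕ, Partrec R ∧ ∀ f : List ℕ, (∃ d, Good c B p q f d) →
      ∃ d, Good c B p q f d ∧ outp k d ∈ R (Encodable.encode f) := by
  let g : ℕ → ℕ → Option ℕ := fun n m =>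
    (Encodable.decode (α := List ℕ) n).bind fun f =>
      (Encodable.decode (α := SData) m).bind fun d =>
        if Good c B p q f d then some (outp k d) else none
  have hg : Primrec₂ g := by
    refine Primrec.option_bind (Primrec.decode.comp Primrec.fst) ?_
    refine Primrec.option_bind (f := fun a : (ℕ × ℕ) × List ℕ =>
      Encodable.decode (α := SData) a.1.2)
      (Primrec.decode.comp (Primrec.snd.comp Primrec.fst)) ?_
    have h := good_prim c B p q
    exact Primrec.ite (h.comp ((Primrec.snd.comp Primrec.fst).pair Primrec.snd))
      (Primrec.option_some.comp ((outp_prim k).comp Primrec.snd)) (Primrec.const none)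
  refine ⟨fun n => Nat.rfindOpt (g n), Partrec.rfindOpt hg.to_comp, ?_⟩
  rintro f ⟨d, hd⟩
  have hdom : (Nat.rfindOpt (g (Encodable.encode f))).Dom := by
    rw [Nat.rfindOpt_dom]
    exact ⟨Encodable.encode d, outp k d, by
      simp only [g, Encodable.encodek, Option.bind_some, if_pos hd, Option.mem_def]⟩
  obtain ⟨v, hv⟩ := Part.dom_iff_mem.mp hdom
  obtain ⟨m, hm⟩ := Nat.rfindOpt_spec hv
  simp only [g, Encodable.encodek, Option.bind_some, Option.mem_def,
    Option.bind_eq_some_iff] at hm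
  obtain ⟨d', _, hd'⟩ := hm
  split_ifs at hd' with hgood
  refine ⟨d', hgood, ?_⟩
  rw [Option.some.inj hd']
  exact hv

lemma exists_mul_code {G : Type} [Group G] (e : G ≃ ℕ) (h : ComputableMul e) :
    ∃ c : Nat.Partrec.Code, ∀ a b : ℕ,
      c.eval (Nat.pair a b) = Part.some (e (e.symm a * e.symm b)) := by
  have h1 : Computable fun n : ℕ => e (e.symm n.unpair.1 * e.symm n.unpair.2) :=
    Computable₂.comp (f := fun m n : ℕ => e (e.symm m * e.symm n)) h (Computable.fst.comp Computable.unpair)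
      (Computable.snd.comp Computable.unpair)
  obtain ⟨c, hc⟩ := Nat.Partrec.Code.exists_code.mp (Partrec.nat_iff.mp h1)
  refine ⟨c, fun a b => ?_⟩
  rw [hc]
  simp

/-- The true list of products. -/
noncomputable def tprods {G : Type} [Group G] (e : G ≃ ℕ) (B : List (ℕ × ℕ)) (d : SData) :
    List ℕ :=
  B.flatMap (fun p => (row d p.1).map (fun r => e (e.symm p.2 * e.symm r)))

lemma prods_eq {G : Type} [Group G] (e : G ≃ ℕ) (c : Nat.Partrec.Code)
    (hc : ∀ a b : ℕ, c.eval (Nat.pair a b) = Part.some (e (e.symm a * e.symm b)))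
    (B : List (ℕ × ℕ)) (d : SData) (h : ∀ y ∈ prods c B d, ∃ x, some x = y) :
    prods c B d = (tprods e B d).map some := by
  unfold prods tprods
  rw [List.map_flatMap]
  have : ∀ p ∈ B, (row d p.1).map
        (fun r => Nat.Partrec.Code.evaln d.2.2 c (Nat.pair p.2 r)) =
      ((row d p.1).map (fun r => e (e.symm p.2 * e.symm r))).map some := by
    intro p hp
    rw [List.map_map]
    apply List.map_congr_left
    intro r hr
    obtain ⟨x, hx⟩ := h (Nat.Partrec.Code.evaln d.2.2 c (Nat.pair p.2 r))
      (List.mem_flatMap.mpr ⟨p, hp, List.mem_map.mpr ⟨r, hr, rfl⟩⟩)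
    have h2 := Nat.Partrec.Code.evaln_sound (Option.mem_def.mpr hx.symm)
    rw [hc, Part.mem_some_iff] at h2
    rw [← hx, h2]
    rfl
  exact List.flatMap_congr this

lemma exists_time {G : Type} [Group G] (e : G ≃ ℕ) (c : Nat.Partrec.Code)
    (hc : ∀ a b : ℕ, c.eval (Nat.pair a b) = Part.some (e (e.symm a * e.symm b)))
    (B : List (ℕ × ℕ)) (M : List (ℕ × ℕ)) (n : ℕ) :
    ∃ t, ∀ y ∈ prods c B (M, n, t), ∃ x, some x = y := by
  have h0 : ∀ a b : ℕ, ∃ t, e (e.symm a * e.symm b) ∈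
      Nat.Partrec.Code.evaln t c (Nat.pair a b) := by
    intro a b
    rw [← Nat.Partrec.Code.evaln_complete, hc]
    exact Part.mem_some _
  choose τ hτ using h0
  refine ⟨∑ p ∈ B.toFinset, ∑ r ∈ Finset.range n, τ p.2 r, ?_⟩
  intro y hy
  obtain ⟨p, hp, hy⟩ := List.mem_flatMap.mp hy
  obtain ⟨r, hr, rfl⟩ := List.mem_map.mp hy
  have hr' : r ∈ Finset.range n := by
    have := (List.mem_filter.mp hr).1
    simpa using this
  refine ⟨e (e.symm p.2 * e.symm r), (Option.mem_def.mp
    (Nat.Partrec.Code.evaln_mono ?_ (hτ p.2 r))).symm⟩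
  calc τ p.2 r ≤ ∑ r ∈ Finset.range n, τ p.2 r :=
        Finset.single_le_sum (f := fun r => τ p.2 r) (fun _ _ => Nat.zero_le _) hr'
    _ ≤ _ := Finset.single_le_sum (f := fun p : ℕ × ℕ => ∑ r ∈ Finset.range n, τ p.2 r)
        (fun _ _ => Nat.zero_le _) (List.mem_toFinset.mpr hp)

/-- The tuple of finite sets described by the data. -/
noncomputable def sets {G : Type} (e : G ≃ ℕ) (d : SData) (s : ℕ) : Finset G :=
  (row d s).toFinset.image e.symm

lemma row_nodup (d : SData) (s : ℕ) : (row d s).Nodup := List.nodup_range.filter _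

lemma sets_card {G : Type} (e : G ≃ ℕ) (d : SData) (s : ℕ) :
    (sets e d s).card = (row d s).length := by
  unfold sets
  rw [Finset.card_image_of_injective _ e.symm.injective,
    List.toFinset_card_of_nodup (row_nodup d s)]

lemma enc_sets {G : Type} (e : G ≃ ℕ) (d : SData) (s : ℕ) :
    encFinset e (sets e d s) = Encodable.encode (row d s) := by
  unfold encFinset encFinsetNat sets
  rw [Finset.image_image]
  have : (e ∘ e.symm : ℕ → ℕ) = id := by ext; simp
  rw [this, Finset.image_id]
  congr 1
  rw [List.toFinset_sort _ (row_nodup d s)]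
  exact (List.pairwise_le_range).filter _

lemma outp_eq {G : Type} (e : G ≃ ℕ) (k : ℕ) (d : SData) :
    Encodable.encode (List.ofFn fun s : Fin k => encFinset e (sets e d s)) = outp k d := by
  unfold outp
  congr 1
  apply List.ext_getElem
  · simp
  · intro i h1 h2
    simp [enc_sets]

/-- The list of tile codes. -/
noncomputable def tiles {G : Type} (e : G ≃ ℕ) (k : ℕ) (K : Fin k → Finset G) : List (ℕ × ℕ) :=
  (List.finRange k).flatMap (fun s => (K s).toList.map (fun g => ((s : ℕ), e g)))

lemma tprods_mem {G : Type} [Group G] (e : G ≃ ℕ) (k : ℕ) (K : Fin k → Finset G) (d : SData)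
    (g : G) : e g ∈ tprods e (tiles e k K) d ↔
      g ∈ Finset.univ.biUnion fun s : Fin k => K s * sets e d s := by
  unfold tprods tiles sets
  simp only [List.mem_flatMap, List.mem_map, List.mem_finRange, true_and, Finset.mem_toList,
    Finset.mem_biUnion, Finset.mem_univ, Finset.mem_mul, Finset.mem_image, List.mem_toFinset]
  constructor
  · rintro ⟨p, ⟨s, a, ha, rfl⟩, r, hr, h⟩
    refine ⟨s, a, ha, e.symm r, ⟨r, hr, rfl⟩, ?_⟩
    simpa using h
  · rintro ⟨s, a, ha, y, ⟨r, hr, rfl⟩, rfl⟩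
    exact ⟨(s, e a), ⟨s, a, ha, rfl⟩, r, hr, by simp⟩

lemma tprods_length {G : Type} [Group G] (e : G ≃ ℕ) (k : ℕ) (K : Fin k → Finset G)
    (d : SData) : (tprods e (tiles e k K) d).length =
      ∑ s : Fin k, (K s).card * (sets e d s).card := by
  unfold tprods tiles
  rw [List.flatMap_assoc, List.length_flatMap, Fin.sum_univ_def]
  congr 1
  apply List.map_congr_left
  intro s _
  rw [List.length_flatMap, sets_card]
  simp [Function.comp_def]

lemma filter_length {G : Type} (e : G ≃ ℕ) (T : Finset G) (P : ℕ → Bool) :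
    (((T.image e).sort (· ≤ ·)).filter P).length = (T.filter (fun g => P (e g) = true)).card := by
  rw [← List.toFinset_card_of_nodup ((Finset.sort_nodup _ _).filter _), List.toFinset_filter,
    Finset.sort_toFinset, Finset.filter_image, Finset.card_image_of_injective _ e.injective]

/-- The test means what it should. -/
lemma good_iff {G : Type} [Group G] (e : G ≃ ℕ) (c : Nat.Partrec.Code)
    (hc : ∀ a b : ℕ, c.eval (Nat.pair a b) = Part.some (e (e.symm a * e.symm b)))
    (k p q : ℕ) (K : Fin k → Finset G) (T : Finset G) (d : SData)
    (h : ∀ y ∈ prods c (tiles e k K) d, ∃ x, some x = y) :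
    Good c (tiles e k K) p q ((T.image e).sort (· ≤ ·)) d ↔
      (Finset.univ.biUnion fun s : Fin k => K s * sets e d s) ⊆ T ∧
      T.card * q ≤ p * T.card + (Finset.univ.biUnion fun s : Fin k => K s * sets e d s).card * q ∧
      (∑ s : Fin k, (K s).card * (sets e d s).card) * q ≤
        (q + p) * (Finset.univ.biUnion fun s : Fin k => K s * sets e d s).card := by
  set U := Finset.univ.biUnion fun s : Fin k => K s * sets e d s with hU
  have hp := prods_eq e c hc _ d h
  have hlen : (prods c (tiles e k K) d).length = ∑ s : Fin k, (K s).card * (sets e d s).card := by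
    rw [hp, List.length_map, tprods_length]
  have hflen : ((T.image e).sort (· ≤ ·)).length = T.card := by
    rw [Finset.length_sort, Finset.card_image_of_injective _ e.injective]
  have hsub : (∀ y ∈ prods c (tiles e k K) d, ∃ x ∈ (T.image e).sort (· ≤ ·), some x = y) ↔
      U ⊆ T := by
    rw [hp]
    constructor
    · intro h g hg
      rw [hU, ← tprods_mem] at hg
      obtain ⟨x, hx, hxe⟩ := h (some (e g)) (List.mem_map.mpr ⟨_, hg, rfl⟩)
      have hxe := Option.some.inj hxe
      subst hxe
      simpa using hx
    · intro h y hy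
      obtain ⟨x, hx, rfl⟩ := List.mem_map.mp hy
      refine ⟨x, ?_, rfl⟩
      have : e.symm x ∈ U := by
        rw [hU, ← tprods_mem]
        simpa using hx
      rw [Finset.mem_sort, Finset.mem_image]
      exact ⟨_, h this, by simp⟩
  have hhit : U ⊆ T → hits c (tiles e k K) ((T.image e).sort (· ≤ ·)) d = U.card := by
    intro hUT
    unfold hits
    rw [filter_length]
    congr 1
    ext g
    have hm : some (e g) ∈ prods c (tiles e k K) d ↔ g ∈ U := by
      rw [hp, hU, ← tprods_mem]
      simp
    rw [Finset.mem_filter, decide_eq_true_iff, hm]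
    exact ⟨fun h => h.2, fun h => ⟨hUT h, h⟩⟩
  unfold Good
  rw [hsub, hlen, hflen]
  constructor
  · rintro ⟨h1, h2⟩
    rw [hhit h1] at h2
    exact ⟨h1, h2⟩
  · rintro ⟨h1, h2⟩
    refine ⟨h1, ?_⟩
    rw [hhit h1]
    exact h2

lemma exists_sdata {G : Type} (e : G ≃ ℕ) (k : ℕ) (Rs : Fin k → Finset G) :
    ∃ (M : List (ℕ × ℕ)) (n : ℕ), ∀ (t : ℕ) (s : Fin k), sets e (M, n, t) s = Rs s := by
  refine ⟨tiles e k Rs, ∑ s : Fin k, ∑ g ∈ Rs s, (e g + 1), fun t s => ?_⟩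
  ext g
  unfold sets row tiles
  simp only [Finset.mem_image, List.mem_toFinset, List.mem_filter, List.mem_range,
    decide_eq_true_iff, List.mem_flatMap, List.mem_finRange, true_and, List.mem_map,
    Finset.mem_toList, Prod.mk.injEq]
  constructor
  · rintro ⟨x, ⟨_, s', g', hg', hs, rfl⟩, rfl⟩
    have := Fin.ext hs
    subst this
    simpa using hg'
  · intro hg
    refine ⟨e g, ⟨?_, s, g, hg, rfl, rfl⟩, by simp⟩
    calc e g < e g + 1 := Nat.lt_succ_self _
      _ ≤ ∑ g ∈ Rs s, (e g + 1) :=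
        Finset.single_le_sum (f := fun g => e g + 1) (fun _ _ => Nat.zero_le _) hg
      _ ≤ _ := Finset.single_le_sum (f := fun s : Fin k => ∑ g ∈ Rs s, (e g + 1))
        (fun _ _ => Nat.zero_le _) (Finset.mem_univ s)

/-- **computable Ornstein–Weiss covering lemma.** For a Følner sequence
`(F_i)` in a computable amenable group and every rational `ε > 0`, there are indices
`j_1, …, j_k`, a number `N`, and a partial computable function `R` (acting on encodings:
it receives the code of a finite subset and returns the code of a `k`-tuple of finite
subsets) such that for every `i > N`, `R` is defined on (the code of) `F_i` and returns
(the code of) a tuple `(R_1, …, R_k)` of finite subsets of `G` with: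
`⋃_s F_{j_s} R_s ⊆ F_i`; `|F_i \ ⋃_s F_{j_s} R_s| ≤ ε |F_i|`;
`∑_s |F_{j_s}|·|R_s| ≤ (1+ε)|⋃_s F_{j_s} R_s|`; and `∑_s |F_{j_s}|·|R_s| ≤ (1+ε)|F_i|`. -/
theorem statement18 {G : Type} [Group G]
    (e : G ≃ ℕ) (hGcomp : ComputableMul e)
    (F : ℕ → Finset G) (hF : IsFolner F)
    (ε : ℚ) (hε : 0 < ε) :
    ∃ (k : ℕ) (j : Fin k → ℕ) (N : ℕ) (R : ℕ →. ℕ), Partrec R ∧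
      ∀ i : ℕ, N < i → ∃ Rs : Fin k → Finset G,
        (Encodable.encode (List.ofFn fun s : Fin k => encFinset e (Rs s)))
            ∈ R (encFinset e (F i)) ∧
        (Finset.univ.biUnion fun s : Fin k => F (j s) * Rs s) ⊆ F i ∧
        (((F i \ Finset.univ.biUnion fun s : Fin k => F (j s) * Rs s)).card : ℝ) ≤
          (ε : ℝ) * ((F i).card : ℝ) ∧
        (∑ s : Fin k, ((F (j s)).card : ℝ) * ((Rs s).card : ℝ)) ≤
          (1 + (ε : ℝ)) * (((Finset.univ.biUnion fun s : Fin k => F (j s) * Rs s)).card : ℝ) ∧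
        (∑ s : Fin k, ((F (j s)).card : ℝ) * ((Rs s).card : ℝ)) ≤
          (1 + (ε : ℝ)) * ((F i).card : ℝ) := by
  obtain ⟨k, j, N, hOW⟩ := ornstein_weiss F hF.1 hF.2 (ε : ℝ) (by exact_mod_cast hε)
  obtain ⟨c, hc⟩ := exists_mul_code e hGcomp
  obtain ⟨R, hR, hsearch⟩ := search c (tiles e k fun s => F (j s)) k ε.num.toNat ε.den
  refine ⟨k, j, N, R, hR, fun i hi => ?_⟩
  have hq : (0 : ℝ) < ε.den := by exact_mod_cast ε.den_pos
  have hpq : (ε : ℝ) * ε.den = (ε.num.toNat : ℝ) := by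
    have h1 : ((ε.num.toNat : ℤ) : ℚ) = ε * ε.den := by
      rw [Int.toNat_of_nonneg (Rat.num_nonneg.mpr hε.le), Rat.mul_den_eq_num]
    exact_mod_cast h1.symm
  have key2 : ∀ a b : ℕ, a * ε.den ≤ ε.num.toNat * a + b * ε.den ↔
      (a : ℝ) - b ≤ (ε : ℝ) * a := by
    intro a b
    rw [← Nat.cast_le (α := ℝ)]
    push_cast
    rw [← hpq, ← mul_le_mul_iff_left₀ hq (b := (a : ℝ) - b)]
    constructor <;> intro h <;> linarith
  have key3 : ∀ a b : ℕ, a * ε.den ≤ (ε.den + ε.num.toNat) * b ↔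
      (a : ℝ) ≤ (1 + (ε : ℝ)) * b := by
    intro a b
    rw [← Nat.cast_le (α := ℝ)]
    push_cast
    rw [← hpq, ← mul_le_mul_iff_left₀ hq (b := (a : ℝ))]
    constructor <;> intro h <;> linarith
  have hsd : ∀ U : Finset G, U ⊆ F i → ((F i \ U).card : ℝ) = (F i).card - U.card := by
    intro U hU
    rw [Finset.card_sdiff_of_subset hU, Nat.cast_sub (Finset.card_le_card hU)]
  obtain ⟨d, hd, hout⟩ := hsearch (((F i).image e).sort (· ≤ ·)) (by
    obtain ⟨Rs, h1, h2, h3⟩ := hOW i hi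
    obtain ⟨M, n, hM⟩ := exists_sdata e k Rs
    obtain ⟨t, ht⟩ := exists_time e c hc (tiles e k fun s => F (j s)) M n
    refine ⟨(M, n, t), ?_⟩
    rw [good_iff e c hc _ _ _ _ _ _ ht]
    simp only [hM]
    refine ⟨h1, ?_, ?_⟩
    · rw [key2, ← hsd _ h1]
      exact h2
    · rw [key3]
      push_cast
      exact h3)
  have hd2 := hd
  rw [good_iff e c hc _ _ _ _ _ _
    (fun y hy => (hd.1 y hy).imp (fun _ h => h.2)), key2, key3] at hd2
  obtain ⟨h1, h2, h3⟩ := hd2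
  rw [← hsd _ h1] at h2
  push_cast at h3
  refine ⟨fun s => sets e d s, ?_, h1, h2, h3, ?_⟩
  · rw [outp_eq]
    exact hout
  · refine h3.trans ?_
    have hε' : (0 : ℝ) < ε := by exact_mod_cast hε
    have hle : ((Finset.univ.biUnion fun s : Fin k => F (j s) * sets e d s).card : ℝ) ≤
        (F i).card := by exact_mod_cast Finset.card_le_card h1
    exact mul_le_mul_of_nonneg_left hle (by linarith)

end Brudno
end
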